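/- arXiv:2410.11168 — 4 statements merged into one kernel-verified Lean document; each statement's English description precedes it below -/
import Mathlib

section
/- For all real numbers a > 0 and b > 0, the diameter of the quotient ℝ²/Λ(a,b) satisfies diam(ℝ²/Λ(a,b)) ≤ b/(2a) + √(a² + b²)/2; equivalently, every point of the Euclidean plane lies within distance b/(2a) + √(a² + b²)/2 of the subgroup Λ(a,b). -/
/-!
With `e = 1` and `u = a - bi`, the difference of the two generators, `e` and `u` both lie in
`Λ(a,b)` and form a basis of the plane, so any `v` is `s e + t u` with `s, t` real. Let `k` be the
nearest integer to `s` and `c = s - k`. Since `e - u / a = (b / a) i`,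
`v = k e + (t + c / a) u + c (b / a) i`.
With `m` the nearest integer to `t + c / a`, the lattice point `k e + m u` is at distance at most
`b / (2a) + ‖u‖ / 2` from `v` (`exists_mem_Lambda_norm_sub_le`). Both assertions follow, because
the distance of two classes in the quotient is at most the norm of any representative of their
difference.
-/

open Filter Topology

/-- The additive subgroup `Λ(a,b)` of the Euclidean plane (identified with `ℂ`,
whose norm is the Euclidean norm `‖x + y√-1‖ = √(x² + y²)`), generated by the two
vectors `(1, 0)` and `(1 - a, b)`. -/
noncomputable def Lambda (a b : ℝ) : AddSubgroup ℂ :=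
  AddSubgroup.closure {(1 : ℂ), (↑(1 - a) + ↑b * Complex.I : ℂ)}

theorem exists_mem_Lambda_norm_sub_le (a b : ℝ) (ha : 0 < a) (hb : 0 < b) (v : ℂ) :
    ∃ l ∈ Lambda a b, ‖v - l‖ ≤ b / (2 * a) + Real.sqrt (a ^ 2 + b ^ 2) / 2 := by
  set u : ℂ := (a : ℂ) - b * Complex.I with hu
  have he : (1 : ℂ) ∈ Lambda a b := AddSubgroup.subset_closure (by simp)
  have hu_mem : u ∈ Lambda a b := by
    have h2 : (↑(1 - a) + ↑b * Complex.I : ℂ) ∈ Lambda a b :=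
      AddSubgroup.subset_closure (by simp)
    have h3 := (Lambda a b).sub_mem he h2
    convert h3 using 1
    rw [hu]; push_cast; ring
  have hu_norm : ‖u‖ = Real.sqrt (a ^ 2 + b ^ 2) := by
    rw [Complex.norm_eq_sqrt_sq_add_sq]
    simp [hu]
  -- `v = s e + t u` with `s = x + y a / b` and `t = -y / b`
  set s : ℝ := v.re + v.im * a / b with hs
  set c : ℝ := s - round s with hc
  set r : ℝ := -v.im / b + c / a with hr
  refine ⟨round s • (1 : ℂ) + round r • u,
    (Lambda a b).add_mem ((Lambda a b).zsmul_mem he _) ((Lambda a b).zsmul_mem hu_mem _), ?_⟩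
  have key : v - (round s • (1 : ℂ) + round r • u) =
      ((c * (b / a) : ℝ) : ℂ) * Complex.I + ((r - round r : ℝ) : ℂ) * u := by
    apply Complex.ext
    · have : v.re - round s = r * a := by
        rw [hr, hc, hs]; field_simp; ring
      simp [hu]
      linarith
    · have : v.im = c * (b / a) - r * b := by
        rw [hr]; field_simp; ring
      simp [hu]
      linarith
  have hc_le : |c| ≤ 1 / 2 := abs_sub_round s
  have hr_le : |r - round r| ≤ 1 / 2 := abs_sub_round r
  rw [key]
  calc _ ≤ ‖((c * (b / a) : ℝ) : ℂ) * Complex.I‖ + ‖((r - round r : ℝ) : ℂ) * u‖ := norm_add_le _ _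
    _ = |c| * (b / a) + |r - round r| * Real.sqrt (a ^ 2 + b ^ 2) := by
      rw [norm_mul, norm_mul, Complex.norm_I, Complex.norm_real, Complex.norm_real, hu_norm,
        Real.norm_eq_abs, Real.norm_eq_abs, abs_mul, abs_of_pos (div_pos hb ha), mul_one]
    _ ≤ 1 / 2 * (b / a) + 1 / 2 * Real.sqrt (a ^ 2 + b ^ 2) := by gcongr
    _ = _ := by field_simp

/-- For all real numbers `a > 0` and `b > 0`, the diameter of the quotient
`ℝ²/Λ(a,b)` (with the quotient seminorm and induced pseudometric) satisfies
`diam(ℝ²/Λ(a,b)) ≤ b/(2a) + √(a² + b²)/2`; equivalently, every point of the Euclidean plane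
lies within distance `b/(2a) + √(a² + b²)/2` of the subgroup `Λ(a,b)`. -/
theorem diam_quotient_le (a b : ℝ) (ha : 0 < a) (hb : 0 < b) :
    Metric.diam (Set.univ : Set (ℂ ⧸ Lambda a b)) ≤
        b / (2 * a) + Real.sqrt (a ^ 2 + b ^ 2) / 2 ∧
      ∀ v : ℂ, Metric.infDist v (Lambda a b : Set ℂ) ≤
        b / (2 * a) + Real.sqrt (a ^ 2 + b ^ 2) / 2 := by
  constructor
  · refine Metric.diam_le_of_forall_dist_le (by positivity) ?_
    intro x _ y _
    rw [dist_eq_norm]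
    obtain ⟨v, hv⟩ := QuotientAddGroup.mk_surjective (x - y)
    obtain ⟨l, hl, hle⟩ := exists_mem_Lambda_norm_sub_le a b ha hb v
    have hmk : ((v - l : ℂ) : ℂ ⧸ Lambda a b) = x - y := by
      rw [← hv, QuotientAddGroup.mk_sub, (QuotientAddGroup.eq_zero_iff l).2 hl, sub_zero]
    rw [← hmk]
    exact (QuotientAddGroup.norm_mk_le_norm).trans hle
  · intro v
    obtain ⟨l, hl, hle⟩ := exists_mem_Lambda_norm_sub_le a b ha hb v
    exact (Metric.infDist_le_dist_of_mem hl).trans (by rwa [dist_eq_norm])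
end

section
/- For all real numbers a > 0 and b > 0, the diameter of ℝ²/Λ(a,b) satisfies diam(ℝ²/Λ(a,b)) ≥ ‖[(1/2, 0)]‖ ≥ b/(2√(a² + b²)). -/
/-!
The linear functional `f (x, y) = b x + a y` takes the value `b` on both generators of `Λ(a,b)`,
so it takes values in `bℤ` on `Λ(a,b)` and in `b (1/2 + ℤ)` on the coset of `(1/2, 0)`.
The elements of `b (1/2 + ℤ)` have absolute value at least `b / 2`, and `f` has operator norm `√(a² + b²)`, which gives the lower bound for the
quotient norm (`Lambda_functional`, `le_norm_half_add`).
The quotient norm of a class is its distance to `0`, hence at most the diameter, once the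
quotient is known to be bounded: every class has a representative in the box `[0,1] × [0,b]`
(`norm_quotient_le`).
-/

open Filter Topology

open Complex in
/-- The functional `(x, y) ↦ b x + a y` vanishes on `(-a, b)`, the difference of the generators. -/
theorem Lambda_functional {a b : ℝ} {z : ℂ} (hz : z ∈ Lambda a b) :
    ∃ k : ℤ, b * z.re + a * z.im = b * k := by
  unfold Lambda at hz
  induction hz using AddSubgroup.closure_induction with
  | mem x hx =>
    refine ⟨1, ?_⟩
    rcases hx with rfl | rfl
    · simp
    · simp
      ring
  | zero => exact ⟨0, by simp⟩
  | add x y _ _ hx hy =>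
    obtain ⟨k, hk⟩ := hx
    obtain ⟨l, hl⟩ := hy
    refine ⟨k + l, ?_⟩
    push_cast [add_re, add_im]
    linarith
  | neg x _ hx =>
    obtain ⟨k, hk⟩ := hx
    refine ⟨-k, ?_⟩
    push_cast [neg_re, neg_im]
    linarith

/-- The bound is the Cauchy–Schwarz inequality for the functional `(x, y) ↦ b x + a y`, which on
`(1/2, 0) + Λ(a,b)` takes values in `b (1/2 + ℤ)`. -/
theorem le_norm_half_add {a b : ℝ} (hb : 0 < b) {z : ℂ} (hz : z ∈ Lambda a b) :
    b / (2 * Real.sqrt (a ^ 2 + b ^ 2)) ≤ ‖((1 / 2 : ℝ) : ℂ) + z‖ := by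
  obtain ⟨k, hk⟩ := Lambda_functional hz
  have hpos : 0 < a ^ 2 + b ^ 2 := by positivity
  rw [div_le_iff₀ (by positivity), Complex.norm_def, Complex.normSq_apply,
    mul_left_comm, ← Real.sqrt_mul (add_nonneg (mul_self_nonneg _) (mul_self_nonneg _))]
  have hhalf : (1 / 2 : ℝ) ^ 2 ≤ (1 / 2 + (k : ℝ)) ^ 2 := by
    have : (0 : ℤ) ≤ k * (k + 1) := by
      rcases le_or_gt 0 k with h | h <;> nlinarith
    have : (0 : ℝ) ≤ k * (k + 1) := by exact_mod_cast this
    nlinarith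
  have hre : ((((1 / 2 : ℝ) : ℂ) + z)).re = 1 / 2 + z.re := by
    rw [Complex.add_re, Complex.ofReal_re]
  have him : ((((1 / 2 : ℝ) : ℂ) + z)).im = z.im := by
    rw [Complex.add_im, Complex.ofReal_im, zero_add]
  rw [hre, him]
  have : b / 2 ≤ Real.sqrt (((1 / 2 + z.re) * (1 / 2 + z.re) + z.im * z.im) *
      (a ^ 2 + b ^ 2)) := by
    apply Real.le_sqrt_of_sq_le
    have hv : b * (1 / 2 + z.re) + a * z.im = b * (1 / 2 + k) := by linarith
    calc (b / 2) ^ 2 = b ^ 2 * (1 / 2) ^ 2 := by ring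
      _ ≤ b ^ 2 * (1 / 2 + (k : ℝ)) ^ 2 := by gcongr
      _ = (b * (1 / 2 + z.re) + a * z.im) ^ 2 := by rw [hv]; ring
      _ ≤ _ := by nlinarith [sq_nonneg (a * (1 / 2 + z.re) - b * z.im)]
  linarith

/-- Subtracting lattice vectors moves any point into a fixed box: first reduce the second
coordinate modulo `b`, then the first modulo `1`. -/
theorem norm_quotient_le {a b : ℝ} (hb : 0 < b) (q : ℂ ⧸ Lambda a b) : ‖q‖ ≤ 1 + b := by
  obtain ⟨z, rfl⟩ := QuotientAddGroup.mk_surjective q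
  set v : ℂ := ↑(1 - a) + ↑b * Complex.I with hv
  set n : ℤ := ⌊z.im / b⌋ with hn
  set m : ℤ := ⌊(z - n • v).re⌋ with hm
  have h1 : (1 : ℂ) ∈ Lambda a b := AddSubgroup.subset_closure (by simp)
  have h2 : v ∈ Lambda a b := AddSubgroup.subset_closure (by simp [hv])
  have hmem : n • v + m • (1 : ℂ) ∈ Lambda a b :=
    add_mem (zsmul_mem h2 n) (zsmul_mem h1 m)
  have heq : (z : ℂ ⧸ Lambda a b) = ((z - (n • v + m • (1 : ℂ)) : ℂ) : ℂ ⧸ Lambda a b) := by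
    rw [QuotientAddGroup.eq]
    have : -z + (z - (n • v + m • (1 : ℂ))) = -(n • v + m • (1 : ℂ)) := by abel
    rw [this]
    exact neg_mem hmem
  rw [heq]
  refine (QuotientAddGroup.norm_mk_le_norm).trans ((Complex.norm_le_abs_re_add_abs_im _).trans ?_)
  gcongr
  · have : (z - (n • v + m • (1 : ℂ))).re = Int.fract (z - n • v).re := by
      rw [Int.fract, ← hm]
      simp
      ring
    rw [this, abs_of_nonneg (Int.fract_nonneg _)]
    exact (Int.fract_lt_one _).le
  · have : (z - (n • v + m • (1 : ℂ))).im = b * Int.fract (z.im / b) := by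
      rw [Int.fract, ← hn]
      simp [hv]
      field_simp
    rw [this, abs_of_nonneg (mul_nonneg hb.le (Int.fract_nonneg _))]
    nlinarith [Int.fract_lt_one (z.im / b)]

/-- For all real numbers `a > 0` and `b > 0`, the diameter of `ℝ²/Λ(a,b)`
satisfies `diam(ℝ²/Λ(a,b)) ≥ ‖[(1/2, 0)]‖ ≥ b/(2√(a² + b²))`, where `‖·‖` denotes the
quotient seminorm on `ℝ²/Λ(a,b)`. -/
theorem diam_quotient_ge (a b : ℝ) (ha : 0 < a) (hb : 0 < b) :
    b / (2 * Real.sqrt (a ^ 2 + b ^ 2)) ≤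
        ‖(((1 / 2 : ℝ) : ℂ) : ℂ ⧸ Lambda a b)‖ ∧
      ‖(((1 / 2 : ℝ) : ℂ) : ℂ ⧸ Lambda a b)‖ ≤
        Metric.diam (Set.univ : Set (ℂ ⧸ Lambda a b)) := by
  constructor
  · rw [QuotientAddGroup.le_norm_iff]
    intro m hm
    have hz : -((1 / 2 : ℝ) : ℂ) + m ∈ Lambda a b := QuotientAddGroup.eq.1 hm.symm
    simpa using le_norm_half_add hb hz
  · -- `Metric.diam` of an unbounded set is `0`, so boundedness is needed.
    have hbdd : Bornology.IsBounded (Set.univ : Set (ℂ ⧸ Lambda a b)) :=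
      isBounded_iff_forall_norm_le.2 ⟨1 + b, fun q _ => norm_quotient_le hb q⟩
    rw [← dist_zero_right]
    exact Metric.dist_le_diam_of_mem hbdd (Set.mem_univ _) (Set.mem_univ _)
end

section
/- Let (aᵢ) and (bᵢ) be sequences of positive real numbers with aᵢ → 0 and bᵢ → 0 as i → ∞. Then diam(ℝ²/Λ(aᵢ, bᵢ)) → 0 if and only if bᵢ/aᵢ → 0. -/
/-!
With `w = (-a, b)` the lattice `Λ(a,b)` is generated by `1` and `w`. The linear form
`ψ(x, y) = b x + a y` vanishes on `w`, so it maps the lattice onto `ℤ b`, and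
`|ψ v| ≤ (a + b) ‖v‖`.

* Lower bound: every lattice translate of `1/2` has `|ψ| ≥ b / 2`, so the diameter is at least
  `b / (2 (a + b))` (`le_diam`). Since `b / a = s / (1 - s)` for `s = b / (a + b)`, a diameter
  tending to `0` forces `b / a → 0`.
* Upper bound: translating by multiples of `1` puts `ψ` into `[0, b)`, and translating by multiples
  of `w` then puts the first coordinate into `[0, a)`. The resulting representative has norm at most
  `a + (b / a + b)` (`norm_le`), which tends to `0` when `a`, `b` and `b / a` do.
-/

open Filter Topology

/-- Every class has a representative `v` with `0 ≤ v.re < a` and `0 ≤ b * v.re + a * v.im < b`. -/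
lemma norm_le {a b : ℝ} (ha : 0 < a) (hb : 0 < b) (x : ℂ ⧸ Lambda a b) :
    ‖x‖ ≤ a + (b / a + b) := by
  obtain ⟨z, rfl⟩ := QuotientAddGroup.mk_surjective x
  obtain ⟨q, hq0, hq1⟩ : ∃ q : ℤ, q * b ≤ b * z.re + a * z.im ∧
      b * z.re + a * z.im < (q + 1) * b :=
    ⟨⌊(b * z.re + a * z.im) / b⌋, (le_div_iff₀ hb).1 (Int.floor_le _),
      (div_lt_iff₀ hb).1 (Int.lt_floor_add_one _)⟩
  obtain ⟨p, hp0, hp1⟩ : ∃ p : ℤ, p * a ≤ z.re - q ∧ z.re - q < (p + 1) * a :=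
    ⟨⌊(z.re - q) / a⌋, (le_div_iff₀ ha).1 (Int.floor_le _),
      (div_lt_iff₀ ha).1 (Int.lt_floor_add_one _)⟩
  set v : ℂ := ⟨z.re - q - p * a, z.im + p * b⟩ with hv
  have hzv : (z : ℂ ⧸ Lambda a b) = (v : ℂ ⧸ Lambda a b) := by
    rw [QuotientAddGroup.eq, Lambda, AddSubgroup.mem_closure_pair]
    refine ⟨-(q + p), p, ?_⟩
    apply Complex.ext
    · simp [hv]
      ring
    · simp [hv]
  rw [hzv]
  refine QuotientAddGroup.norm_mk_le_norm.trans ((Complex.norm_le_abs_re_add_abs_im v).trans ?_)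
  have hre0 : 0 ≤ v.re := by simp only [hv]; linarith
  have hre1 : v.re ≤ a := by simp only [hv]; linarith
  have hψ : b * v.re + a * v.im = b * z.re + a * z.im - q * b := by simp only [hv]; ring
  have hmul := mul_le_mul_of_nonneg_left hre1 hb.le
  have hmul0 := mul_nonneg hb.le hre0
  have him : |v.im| ≤ b / a + b := by
    have h1 : v.im ≤ b / a := (le_div_iff₀ ha).2 (by linarith)
    have h2 : -b ≤ v.im := by
      refine le_of_mul_le_mul_left ?_ ha
      linarith
    have h3 : 0 < b / a := div_pos hb ha
    exact abs_le.2 ⟨by linarith, by linarith⟩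
  rw [abs_of_nonneg hre0]
  linarith

lemma dist_le {a b : ℝ} (ha : 0 < a) (hb : 0 < b) (x y : ℂ ⧸ Lambda a b) :
    dist x y ≤ a + (b / a + b) := by
  rw [dist_eq_norm]
  exact norm_le ha hb _

/-- The class of `1/2` is far from `0`, as `b * re + a * im` is an odd multiple of `b / 2` on it. -/
lemma le_diam {a b : ℝ} (ha : 0 < a) (hb : 0 < b) :
    b / (a + b) ≤ 2 * Metric.diam (Set.univ : Set (ℂ ⧸ Lambda a b)) := by
  have hbd : Bornology.IsBounded (Set.univ : Set (ℂ ⧸ Lambda a b)) :=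
    Metric.isBounded_iff.2 ⟨_, fun x _ y _ => dist_le ha hb x y⟩
  have hdiam := Metric.dist_le_diam_of_mem hbd
    (Set.mem_univ (((1 / 2 : ℂ)) : ℂ ⧸ Lambda a b)) (Set.mem_univ 0)
  rw [dist_zero_right] at hdiam
  have hnorm : b / (a + b) / 2 ≤ ‖(((1 / 2 : ℂ)) : ℂ ⧸ Lambda a b)‖ := by
    rw [QuotientAddGroup.le_norm_iff]
    intro v hv
    rw [QuotientAddGroup.eq, Lambda, AddSubgroup.mem_closure_pair] at hv
    obtain ⟨m, n, h⟩ := hv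
    have hre := congrArg Complex.re h
    have him := congrArg Complex.im h
    simp at hre him
    have hψ : b * v.re + a * v.im = (1 / 2 - (m + n : ℤ)) * b := by
      push_cast
      linear_combination b * hre + a * him
    have hhalf : 1 / 2 ≤ |(1 / 2 - (m + n : ℤ) : ℝ)| := by
      rcases le_or_gt (m + n) 0 with hk | hk
      · have : ((m + n : ℤ) : ℝ) ≤ 0 := by exact_mod_cast hk
        exact le_abs.2 (Or.inl (by linarith))
      · have : (1 : ℝ) ≤ ((m + n : ℤ) : ℝ) := by exact_mod_cast hk
        exact le_abs.2 (Or.inr (by linarith))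
    have h1 : b / 2 ≤ |b * v.re + a * v.im| := by
      rw [hψ, abs_mul, abs_of_pos hb]
      nlinarith
    have h2 : |b * v.re + a * v.im| ≤ (a + b) * ‖v‖ := by
      refine (abs_add_le _ _).trans ?_
      rw [abs_mul, abs_mul, abs_of_pos ha, abs_of_pos hb]
      nlinarith [Complex.abs_re_le_norm v, Complex.abs_im_le_norm v]
    rw [div_right_comm, div_le_iff₀ (by positivity)]
    linarith
  linarith

/-- Let `(aᵢ)` and `(bᵢ)` be sequences of positive real numbers with
`aᵢ → 0` and `bᵢ → 0` as `i → ∞`. Then the flat tori `ℝ²/Λ(aᵢ, bᵢ)` (with the quotient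
pseudometric) have diameter tending to `0` if and only if `bᵢ/aᵢ → 0`. -/
theorem diam_quotient_tendsto_zero_iff (a b : ℕ → ℝ)
    (ha : ∀ i, 0 < a i) (hb : ∀ i, 0 < b i)
    (ha0 : Tendsto a atTop (𝓝 0)) (hb0 : Tendsto b atTop (𝓝 0)) :
    Tendsto (fun i => Metric.diam (Set.univ : Set (ℂ ⧸ Lambda (a i) (b i))))
        atTop (𝓝 0) ↔
      Tendsto (fun i => b i / a i) atTop (𝓝 0) := by
  constructor
  · intro h
    have hs : Tendsto (fun i => b i / (a i + b i)) atTop (𝓝 0) :=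
      squeeze_zero (fun i => (div_pos (hb i) (add_pos (ha i) (hb i))).le)
        (fun i => le_diam (ha i) (hb i)) (by simpa using h.const_mul 2)
    have ht := hs.div (hs.const_sub 1) (by norm_num)
    rw [zero_div] at ht
    refine ht.congr fun i => ?_
    have h1 := (ha i).ne'
    have h2 := (add_pos (ha i) (hb i)).ne'
    have h3 : 1 - b i / (a i + b i) = a i / (a i + b i) := by
      field_simp
      ring
    simp only [Pi.div_apply, h3]
    field_simp
  · intro h
    refine squeeze_zero (fun i => Metric.diam_nonneg) (fun i => ?_)
      (by simpa using ha0.add (h.add hb0))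
    have h1 := ha i
    have h2 := hb i
    exact Metric.diam_le_of_forall_dist_le (by positivity) fun x _ y _ => dist_le h1 h2 x y
end

section
/- For all real numbers a > 0, b > 0 and every point (x₀, y₀) ∈ ℝ², the quotient seminorm satisfies ‖[(x₀, y₀)]‖ ≥ dist(b·x₀ + a·y₀, bℤ)/√(a² + b²), where dist(t, bℤ) = inf{|t − k·b| : k ∈ ℤ}. (Indeed every representative (x, y) of the coset (x₀,y₀) + Λ(a,b) satisfies b x + a y ∈ b x₀ + a y₀ + bℤ, i.e. lies on one of the parallel lines b x + a y = b x₀ + a y₀ + k b, k ∈ ℤ.) -/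
/-!
The linear form `ℓ(z) = b · re z + a · im z` takes the value `b` on both generators of `Λ(a,b)`,
so it maps `Λ(a,b)` into `bℤ` (`Lambda_form`), and hence each representative `m` of a coset lies
on one of the parallel lines `ℓ = ℓ(z₀) - k b`. By Cauchy–Schwarz, `|ℓ(m)| ≤ √(a² + b²) ‖m‖`
(`abs_form_le`), which bounds `‖m‖` below by the distance from the origin to that line.
-/

open Filter Topology

theorem Lambda_form {a b : ℝ} {z : ℂ} (hz : z ∈ Lambda a b) :
    ∃ k : ℤ, b * z.re + a * z.im = k * b := by
  refine AddSubgroup.closure_induction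
    (p := fun z _ => ∃ k : ℤ, b * z.re + a * z.im = k * b) ?_ ?_ ?_ ?_ hz
  · rintro w (rfl | rfl)
    · exact ⟨1, by simp⟩
    · refine ⟨1, ?_⟩
      simp
      ring
  · exact ⟨0, by simp⟩
  · rintro w v _ _ ⟨k, hk⟩ ⟨l, hl⟩
    refine ⟨k + l, ?_⟩
    push_cast
    rw [Complex.add_re, Complex.add_im]
    linarith
  · rintro w _ ⟨k, hk⟩
    refine ⟨-k, ?_⟩
    push_cast
    rw [Complex.neg_re, Complex.neg_im]
    linarith

theorem abs_form_le (a b : ℝ) (z : ℂ) :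
    |b * z.re + a * z.im| ≤ ‖z‖ * Real.sqrt (a ^ 2 + b ^ 2) := by
  apply abs_le_of_sq_le_sq _ (by positivity)
  rw [mul_pow, Real.sq_sqrt (by positivity), Complex.sq_norm, Complex.normSq_apply]
  nlinarith [sq_nonneg (a * z.re - b * z.im)]

/-- For all real numbers `a > 0`, `b > 0` and every point `(x₀, y₀) ∈ ℝ²`,
the quotient seminorm satisfies `‖[(x₀, y₀)]‖ ≥ dist(b·x₀ + a·y₀, bℤ)/√(a² + b²)`,
where `dist(t, bℤ) = inf {|t − k·b| : k ∈ ℤ}`. -/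
theorem quotient_norm_ge_dist_to_lines (a b : ℝ) (ha : 0 < a) (hb : 0 < b)
    (x₀ y₀ : ℝ) :
    (⨅ k : ℤ, |b * x₀ + a * y₀ - k * b|) / Real.sqrt (a ^ 2 + b ^ 2) ≤
      ‖((↑x₀ + ↑y₀ * Complex.I : ℂ) : ℂ ⧸ Lambda a b)‖ := by
  rw [QuotientAddGroup.le_norm_iff]
  intro m hm
  obtain ⟨k, hk⟩ := Lambda_form (QuotientAddGroup.eq.mp hm)
  have hk' : b * x₀ + a * y₀ - k * b = b * m.re + a * m.im := by
    simp at hk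
    linarith
  rw [div_le_iff₀ (by positivity)]
  refine le_trans (ciInf_le ⟨0, ?_⟩ k) (hk' ▸ abs_form_le a b m)
  rintro _ ⟨n, rfl⟩
  exact abs_nonneg _
end
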